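/- For every θ > 0 there exist a constant C(θ) > 0 and T₀ ≥ 1, depending only on θ, such that for all T ≥ T₀, d_Kol(Y₁₂(T)/√T, N(0, 1/(4θ³))) ≤ C(θ) · ln(T)/√T. In particular, Y₁₂(T)/√T converges in distribution to N(0, 1/(4θ³)) as T → ∞. -/

import Mathlib

open MeasureTheory ProbabilityTheory Real Filter Finset
open scoped Topology ENNReal NNReal

noncomputable section

/-- Kolmogorov distance between two Borel measures on `ℝ`. -/
def dKol (μ ν : Measure ℝ) : ℝ :=
  ⨆ z : ℝ, |(μ (Set.Iic z)).toReal - (ν (Set.Iic z)).toReal|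

/-- `X 0, X 1 : ℝ → Ω → ℝ` is a pair of independent centered Gaussian processes,
started at `0`, with almost surely continuous paths on `[0,∞)` and the
Ornstein–Uhlenbeck covariance `E[Xᵢ(s)Xᵢ(t)] = (e^{−θ|t−s|} − e^{−θ(t+s)})/(2θ)`. -/
structure IsOUPair {Ω : Type} [MeasureSpace Ω] (θ : ℝ) (X : Fin 2 → ℝ → Ω → ℝ) : Prop where
  meas : ∀ i t, Measurable (X i t)
  gaussian : ∀ (i : Fin 2) (n : ℕ) (t : Fin n → ℝ) (c : Fin n → ℝ), (∀ j, 0 ≤ t j) →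
      ∃ v : NNReal, Measure.map (fun ω => ∑ j, c j * X i (t j) ω) ℙ = gaussianReal 0 v
  indep : IndepFun (fun ω t => X 0 t ω) (fun ω t => X 1 t ω) ℙ
  cont : ∀ᵐ ω ∂(ℙ : Measure Ω), ∀ i, ContinuousOn (fun t => X i t ω) (Set.Ici 0)
  init : ∀ i ω, X i 0 ω = 0
  cov : ∀ (i : Fin 2) (s t : ℝ), 0 ≤ s → 0 ≤ t →
      ∫ ω, X i s ω * X i t ω ∂ℙ
        = (Real.exp (-θ * |t - s|) - Real.exp (-θ * (t + s))) / (2 * θ)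

variable {Ω : Type} [MeasureSpace Ω]

/-- `F_T := T^{-1/2} ∫₀^T X₁(u) X₂(u) du`. -/
def ouF (X : Fin 2 → ℝ → Ω → ℝ) (T : ℝ) (ω : Ω) : ℝ :=
  (1 / Real.sqrt T) * ∫ u in (0:ℝ)..T, X 0 u ω * X 1 u ω

/-- `X̄ᵢ(T) := T^{-1} ∫₀^T Xᵢ(u) du`. -/
def ouXbar (X : Fin 2 → ℝ → Ω → ℝ) (i : Fin 2) (T : ℝ) (ω : Ω) : ℝ :=
  (1 / T) * ∫ u in (0:ℝ)..T, X i u ω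

/-- `Y_{ij}(T) := ∫₀^T Xᵢ(u)Xⱼ(u) du − T·X̄ᵢ(T)·X̄ⱼ(T)`. -/
def ouY (X : Fin 2 → ℝ → Ω → ℝ) (i j : Fin 2) (T : ℝ) (ω : Ω) : ℝ :=
  (∫ u in (0:ℝ)..T, X i u ω * X j u ω) - T * ouXbar X i T ω * ouXbar X j T ω

/-- Yule's nonsense correlation `ρ(T)`. -/
def ouRho (X : Fin 2 → ℝ → Ω → ℝ) (T : ℝ) (ω : Ω) : ℝ :=
  ouY X 0 1 T ω / Real.sqrt (ouY X 0 0 T ω * ouY X 1 1 T ω)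

/-- `A(n) := (√Tₙ/n) Σ_{k<n} X₁(kΔ)X₂(kΔ)` with `Tₙ = nΔ`. -/
def ouA (X : Fin 2 → ℝ → Ω → ℝ) (n : ℕ) (Δ : ℝ) (ω : Ω) : ℝ :=
  (Real.sqrt (n * Δ) / n) * ∑ k ∈ Finset.range n, X 0 (k * Δ) ω * X 1 (k * Δ) ω

/-- `X̃ᵢ(n) := n^{-1} Σ_{k<n} Xᵢ(kΔ)`. -/
def ouXtilde (X : Fin 2 → ℝ → Ω → ℝ) (i : Fin 2) (n : ℕ) (Δ : ℝ) (ω : Ω) : ℝ :=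
  (1 / n) * ∑ k ∈ Finset.range n, X i (k * Δ) ω

/-- `Ỹ_{ij}(n) := Δ Σ_{k<n} Xᵢ(kΔ)Xⱼ(kΔ) − Tₙ·X̃ᵢ(n)·X̃ⱼ(n)` with `Tₙ = nΔ`. -/
def ouYtilde (X : Fin 2 → ℝ → Ω → ℝ) (i j : Fin 2) (n : ℕ) (Δ : ℝ) (ω : Ω) : ℝ :=
  Δ * ∑ k ∈ Finset.range n, X i (k * Δ) ω * X j (k * Δ) ω
    - (n * Δ) * ouXtilde X i n Δ ω * ouXtilde X j n Δ ω

/-- Yule's discrete nonsense correlation `ρ̃(n)`. -/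
def ouRhoTilde (X : Fin 2 → ℝ → Ω → ℝ) (n : ℕ) (Δ : ℝ) (ω : Ω) : ℝ :=
  ouYtilde X 0 1 n Δ ω / Real.sqrt (ouYtilde X 0 0 n Δ ω * ouYtilde X 1 1 n Δ ω)

/-!
Replace the two paths by their values on a grid of mesh `Δ = T / n`. The empirical covariance
becomes a bilinear form `U ⬝ᵥ A *ᵥ W` in two independent Gaussian vectors with common covariance
`K`, and given `U` it is centred Gaussian with the random variance `V = U ⬝ᵥ (A * K * Aᵀ) *ᵥ U`.
Since `√v` times the density of `N(0, v)` increases with `v`, so does `v` times its law; hence the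
laws `N(0, v)` and `N(0, w)` differ by at most `|v - w| / w` on every event, and the law of the
bilinear form differs from `N(0, w)` by at most `E|V - w| / w ≤ √(Var V + (E V - w)²) / w`.

Here `E V = tr (A * K * Aᵀ * K)`, and `Var V` is twice the trace of the square of that matrix by
Isserlis' formula. Up to scaling, `A` is the identity minus a projection of rank one, which has
little effect on traces. As `K` is essentially a Toeplitz matrix with geometrically decaying
entries, geometric sums give `E V - 1 / (4θ³) = O(1 / T)` and `Var V = O(1 / T)`, uniformly in
fine meshes. The resulting bound of order `1 / √T` passes to the limit `n → ∞`, because the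
Kolmogorov distance to a fixed law is lower semicontinuous under convergence in distribution.
-/

open scoped Matrix

/-! ### The Kolmogorov distance -/

section dKol

lemma dKol_nonneg (μ ν : Measure ℝ) : 0 ≤ dKol μ ν :=
  Real.iSup_nonneg fun _ => abs_nonneg _

variable {μ ν : Measure ℝ} [IsProbabilityMeasure μ] [IsProbabilityMeasure ν]

lemma abs_measureReal_sub_le_dKol (z : ℝ) :
    |μ.real (Set.Iic z) - ν.real (Set.Iic z)| ≤ dKol μ ν := by
  refine le_ciSup (f := fun z => |μ.real (Set.Iic z) - ν.real (Set.Iic z)|) ⟨1, ?_⟩ z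
  rintro _ ⟨y, rfl⟩
  exact abs_sub_le_of_nonneg_of_le measureReal_nonneg measureReal_le_one
    measureReal_nonneg measureReal_le_one

lemma dense_setOf_measure_singleton_eq_zero (μ : Measure ℝ) [SFinite μ] :
    Dense {z : ℝ | μ {z} = 0} := by
  have hcountable : {z : ℝ | 0 < μ {z}}.Countable :=
    Measure.countable_meas_level_set_pos measurable_id
  simpa only [Set.compl_ofPred, not_lt, nonpos_iff_eq_zero] using hcountable.dense_compl ℝ

lemma continuousWithinAt_measureReal_Iic (μ : Measure ℝ) [IsProbabilityMeasure μ] (z : ℝ) :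
    ContinuousWithinAt (fun y => μ.real (Set.Iic y)) (Set.Ioi z) z := by
  simpa only [← cdf_eq_real] using
    ((cdf μ).right_continuous' z).mono Set.Ioi_subset_Ici_self

lemma dKol_le_of_tendsto {ι : Type*} {L : Filter ι} [L.NeBot] {μs : ι → ProbabilityMeasure ℝ}
    {μ : ProbabilityMeasure ℝ} (hμ : Tendsto μs L (𝓝 μ)) {B : ℝ}
    (hB : ∀ᶠ i in L, dKol (μs i) ν ≤ B) : dKol μ ν ≤ B := by
  refine ciSup_le fun z => ?_
  -- Distribution functions converge off the atoms of the limit; an atom is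
  -- approached from the right.
  have hatomless : ∀ y ∈ {y : ℝ | (μ : Measure ℝ) {y} = 0},
      |(μ : Measure ℝ).real (Set.Iic y) - ν.real (Set.Iic y)| ≤ B := by
    intro y hy
    have hcdf := ProbabilityMeasure.tendsto_measure_of_null_frontier_of_tendsto' hμ
      (E := Set.Iic y) (by rwa [frontier_Iic])
    refine le_of_tendsto
      ((((ENNReal.tendsto_toReal (measure_ne_top _ _)).comp hcdf).sub_const _).abs) ?_
    filter_upwards [hB] with i hi using (abs_measureReal_sub_le_dKol y).trans hi
  have hcont : ContinuousWithinAt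
      (fun y => |(μ : Measure ℝ).real (Set.Iic y) - ν.real (Set.Iic y)|) (Set.Ioi z) z :=
    ((continuousWithinAt_measureReal_Iic _ z).sub (continuousWithinAt_measureReal_Iic _ z)).abs
  have hfreq : ∃ᶠ y in 𝓝[>] z, y ∈ {y : ℝ | (μ : Measure ℝ) {y} = 0} := by
    refine (nhdsGT_basis z).frequently_iff.2 fun a ha => ?_
    obtain ⟨y, hy, hyza⟩ :=
      (dense_setOf_measure_singleton_eq_zero (μ : Measure ℝ)).exists_between ha
    exact ⟨y, hyza, hy⟩
  exact le_of_tendsto_of_frequently hcont (hfreq.mono hatomless)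

lemma dKol_map_le_of_tendsto_ae {Ω : Type*} [MeasurableSpace Ω] {P : Measure Ω}
    [IsProbabilityMeasure P] {Z : ℕ → Ω → ℝ} {Z' : Ω → ℝ} (hZ : ∀ n, Measurable (Z n))
    (hlim : ∀ᵐ ω ∂P, Tendsto (fun n => Z n ω) atTop (𝓝 (Z' ω))) {B : ℝ}
    (hB : ∀ᶠ n in atTop, dKol (P.map (Z n)) ν ≤ B) : dKol (P.map Z') ν ≤ B := by
  have hdist : TendstoInDistribution Z atTop Z' (fun _ => P) P :=
    (tendstoInMeasure_of_tendsto_ae (fun n => (hZ n).aestronglyMeasurable)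
      hlim).tendstoInDistribution fun n => (hZ n).aemeasurable
  exact dKol_le_of_tendsto hdist.tendsto hB

end dKol

/-! ### Centred Gaussian laws with different variances -/

section gaussianReal

variable {m : ℝ} {v w : ℝ≥0}

lemma mul_gaussianPDFReal_le_mul_gaussianPDFReal (hvw : v ≤ w) (x : ℝ) :
    v * gaussianPDFReal m v x ≤ w * gaussianPDFReal m w x := by
  rcases eq_zero_or_pos v with rfl | hv
  · simpa using mul_nonneg w.coe_nonneg (gaussianPDFReal_nonneg m w x)
  have hv' : (0 : ℝ) < v := hv
  have hvw' : (v : ℝ) ≤ w := hvw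
  have hmul_inv_sqrt (u : ℝ≥0) (hu : (0 : ℝ) < u) : (u : ℝ) * (√(2 * π * u))⁻¹ = √u / √(2 * π) := by
    rw [Real.sqrt_mul (by positivity)]
    field_simp
    rw [Real.sq_sqrt hu.le]
  simp only [gaussianPDFReal, ← mul_assoc]
  rw [hmul_inv_sqrt v hv', hmul_inv_sqrt w (hv'.trans_le hvw')]
  gcongr ?_ * rexp ?_
  · gcongr
  · rw [neg_div, neg_div, neg_le_neg_iff]
    gcongr

lemma mul_measureReal_gaussianReal_le (hvw : v ≤ w) (s : Set ℝ) :
    v * (gaussianReal m v).real s ≤ w * (gaussianReal m w).real s := by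
  rcases eq_zero_or_pos v with rfl | hv
  · simpa using mul_nonneg w.coe_nonneg measureReal_nonneg
  have hw : w ≠ 0 := (hv.trans_le hvw).ne'
  have hreal {u : ℝ≥0} (hu : u ≠ 0) :
      (gaussianReal m u).real s = ∫ x in s, gaussianPDFReal m u x := by
    rw [measureReal_def, gaussianReal_apply_eq_integral m hu,
      ENNReal.toReal_ofReal (integral_nonneg fun x => gaussianPDFReal_nonneg m u x)]
  rw [hreal hv.ne', hreal hw, ← integral_const_mul, ← integral_const_mul]
  exact integral_mono ((integrable_gaussianPDFReal m v).integrableOn.const_mul _)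
    ((integrable_gaussianPDFReal m w).integrableOn.const_mul _)
    (mul_gaussianPDFReal_le_mul_gaussianPDFReal hvw)

-- Applying the one-sided comparison to `s` and to `sᶜ` bounds the difference on both sides.
lemma mul_abs_measureReal_gaussianReal_sub_le_of_le (hvw : v ≤ w) {s : Set ℝ}
    (hs : MeasurableSet s) :
    w * |(gaussianReal m v).real s - (gaussianReal m w).real s| ≤ w - v := by
  have hle := mul_measureReal_gaussianReal_le (m := m) hvw s
  have hle_compl := mul_measureReal_gaussianReal_le (m := m) hvw sᶜ
  rw [probReal_compl_eq_one_sub hs, probReal_compl_eq_one_sub hs] at hle_compl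
  have hvw' : (0 : ℝ) ≤ w - v := sub_nonneg.2 hvw
  have hs_le := mul_le_of_le_one_right hvw' (measureReal_le_one (μ := gaussianReal m v) (s := s))
  have hs_nonneg := mul_nonneg hvw' (measureReal_nonneg (μ := gaussianReal m v) (s := s))
  rw [← abs_of_nonneg w.coe_nonneg, ← abs_mul, abs_of_nonneg w.coe_nonneg, abs_le]
  constructor <;> linarith

lemma mul_abs_measureReal_gaussianReal_sub_le (m : ℝ) (v w : ℝ≥0) {s : Set ℝ}
    (hs : MeasurableSet s) :
    w * |(gaussianReal m v).real s - (gaussianReal m w).real s| ≤ |(v : ℝ) - w| := by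
  rcases le_total v w with hvw | hwv
  · simpa only [abs_sub_comm (v : ℝ), abs_of_nonneg (sub_nonneg.2 (NNReal.coe_le_coe.2 hvw))]
      using mul_abs_measureReal_gaussianReal_sub_le_of_le hvw hs
  · rw [abs_of_nonneg (sub_nonneg.2 (NNReal.coe_le_coe.2 hwv)), abs_sub_comm]
    calc w * |(gaussianReal m w).real s - (gaussianReal m v).real s|
        ≤ v * |(gaussianReal m w).real s - (gaussianReal m v).real s| := by gcongr
      _ ≤ v - w := mul_abs_measureReal_gaussianReal_sub_le_of_le hwv hs

lemma deriv_mul_exp_sq_div_two {p : ℝ → ℝ} {p' : ℝ → ℝ} (hp : ∀ t, HasDerivAt p (p' t) t) (v : ℝ) :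
    deriv (fun t => p t * rexp (v * t ^ 2 / 2)) =
      fun t => (p' t + p t * (v * t)) * rexp (v * t ^ 2 / 2) := by
  funext t
  have hquad : HasDerivAt (fun t : ℝ => v * t ^ 2 / 2) (v * t) t := by
    convert! ((hasDerivAt_pow 2 t).const_mul v).div_const 2 using 1
    simp only [Nat.cast_ofNat]
    ring
  rw [((hp t).fun_mul hquad.exp).deriv]
  ring

lemma iteratedDeriv_four_exp_sq_div_two (v : ℝ) :
    iteratedDeriv 4 (fun t : ℝ => rexp (v * t ^ 2 / 2)) 0 = 3 * v ^ 2 := by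
  have hd1 : deriv (fun t : ℝ => rexp (v * t ^ 2 / 2)) =
      fun t => v * t * rexp (v * t ^ 2 / 2) := by
    simpa using deriv_mul_exp_sq_div_two (fun t => hasDerivAt_const t (1 : ℝ)) v
  have hp1 (t : ℝ) : HasDerivAt (fun t => v * t) v t := by
    simpa using (hasDerivAt_id t).const_mul v
  have hp2 (t : ℝ) : HasDerivAt (fun t => v + v * t * (v * t)) (2 * v ^ 2 * t) t := by
    convert! ((hp1 t).fun_mul (hp1 t)).const_add v using 1
    ring
  have hp3 (t : ℝ) : HasDerivAt (fun t => 2 * v ^ 2 * t + (v + v * t * (v * t)) * (v * t))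
      (3 * v ^ 2 + 3 * v ^ 3 * t ^ 2) t := by
    convert! ((hasDerivAt_id t).const_mul (2 * v ^ 2)).fun_add ((hp2 t).fun_mul (hp1 t)) using 1
    ring
  rw [iteratedDeriv_eq_iterate]
  simp only [Function.iterate_succ, Function.iterate_zero, Function.comp, id]
  rw [hd1, deriv_mul_exp_sq_div_two hp1, deriv_mul_exp_sq_div_two hp2,
    deriv_mul_exp_sq_div_two hp3]
  simp

lemma integral_pow_four_gaussianReal (v : ℝ≥0) :
    ∫ x, x ^ 4 ∂gaussianReal 0 v = 3 * (v : ℝ) ^ 2 := by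
  have hmoment := iteratedDeriv_mgf_zero (X := id) (μ := gaussianReal 0 v) (by simp) 4
  rw [mgf_id_gaussianReal] at hmoment
  simpa [iteratedDeriv_four_exp_sq_div_two] using hmoment.symm

end gaussianReal

/-! ### Centred Gaussian vectors -/

lemma dotProduct_mulVec_eq_sum {ι κ R : Type*} [Fintype ι] [Fintype κ] [CommSemiring R]
    (A : Matrix ι κ R) (u : ι → R) (w : κ → R) :
    u ⬝ᵥ A *ᵥ w = ∑ i, ∑ j, A i j * (u i * w j) := by
  simp only [dotProduct, Matrix.mulVec, mul_sum]
  exact sum_congr rfl fun i _ => sum_congr rfl fun j _ => by ring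

lemma trace_mul_mul_mul_eq_sum {ι R : Type*} [Fintype ι] [CommSemiring R] (M : Matrix ι ι R)
    {K : Matrix ι ι R} (hK : K.IsSymm) :
    (M * K * (M * K)).trace = ∑ p : ι × ι, ∑ q : ι × ι,
      M p.1 p.2 * M q.1 q.2 * (K p.1 q.2 * K p.2 q.1) := by
  simp only [Matrix.trace, Matrix.diag, Matrix.mul_apply, sum_mul_sum, Fintype.sum_prod_type]
  refine sum_congr rfl fun i _ => ?_
  rw [sum_comm]
  refine sum_congr rfl fun j _ => sum_congr rfl fun k _ => sum_congr rfl fun l _ => ?_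
  rw [hK.apply i l]
  ring

/-- `x` is a Gaussian random vector with mean zero and covariance matrix `K` under `P`. -/
structure IsCenteredGaussianVector {Ω ι : Type*} [MeasurableSpace Ω] [Fintype ι]
    (x : Ω → ι → ℝ) (K : Matrix ι ι ℝ) (P : Measure Ω) : Prop where
  hasGaussianLaw : HasGaussianLaw x P
  integral_eq_zero : ∀ i, ∫ ω, x ω i ∂P = 0
  integral_mul : ∀ i j, ∫ ω, x ω i * x ω j ∂P = K i j

namespace IsCenteredGaussianVector

variable {Ω ι : Type*} [MeasurableSpace Ω] [Fintype ι] {P : Measure Ω} {x : Ω → ι → ℝ}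
  {K : Matrix ι ι ℝ}

lemma of_map_dotProduct (hx : Measurable x)
    (hlaw : ∀ c : ι → ℝ, ∃ v : ℝ≥0, P.map (fun ω => c ⬝ᵥ x ω) = gaussianReal 0 v)
    (hcov : ∀ i j, ∫ ω, x ω i * x ω j ∂P = K i j) : IsCenteredGaussianVector x K P where
  hasGaussianLaw := by
    classical
    refine ⟨isGaussian_of_map_eq_gaussianReal fun L => ?_⟩
    obtain ⟨c, hc⟩ := (dotProductEquiv ℝ ι).surjective L.toLinearMap
    have hL : ⇑L = fun y => c ⬝ᵥ y := by
      rw [← L.coe_coe, ← hc]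
      rfl
    obtain ⟨v, hv⟩ := hlaw c
    exact ⟨0, v, by rw [Measure.map_map (by fun_prop) hx, ← hv, hL, Function.comp_def]⟩
  integral_eq_zero i := by
    classical
    obtain ⟨v, hv⟩ := hlaw (Pi.single i 1)
    simp only [single_dotProduct, one_mul] at hv
    rw [← integral_map (f := fun t => t) (φ := fun ω => x ω i) (by fun_prop) (by fun_prop), hv]
    exact integral_id_gaussianReal
  integral_mul := hcov

lemma isProbabilityMeasure (hx : IsCenteredGaussianVector x K P) : IsProbabilityMeasure P :=
  hx.hasGaussianLaw.isProbabilityMeasure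

lemma isSymm (hx : IsCenteredGaussianVector x K P) : K.IsSymm :=
  Matrix.IsSymm.ext fun i j => by simp only [← hx.integral_mul, mul_comm]

lemma hasGaussianLaw_apply (hx : IsCenteredGaussianVector x K P) (i : ι) :
    HasGaussianLaw (fun ω => x ω i) P :=
  hx.hasGaussianLaw.map_fun (.proj i)

lemma hasGaussianLaw_dotProduct (hx : IsCenteredGaussianVector x K P) (c : ι → ℝ) :
    HasGaussianLaw (fun ω => c ⬝ᵥ x ω) P := by
  classical
  exact hx.hasGaussianLaw.map_fun (dotProductEquiv ℝ ι c).toContinuousLinearMap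

lemma integral_dotProduct (hx : IsCenteredGaussianVector x K P) (c : ι → ℝ) :
    ∫ ω, c ⬝ᵥ x ω ∂P = 0 := by
  simp only [dotProduct]
  rw [integral_finsetSum _ fun i _ => (hx.hasGaussianLaw_apply i).integrable.const_mul _]
  simp [integral_const_mul, hx.integral_eq_zero]

lemma integrable_mul (hx : IsCenteredGaussianVector x K P) (i j : ι) :
    Integrable (fun ω => x ω i * x ω j) P :=
  (hx.hasGaussianLaw_apply i).memLp_two.integrable_mul (hx.hasGaussianLaw_apply j).memLp_two

lemma integral_quadForm (hx : IsCenteredGaussianVector x K P) (M : Matrix ι ι ℝ) :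
    ∫ ω, x ω ⬝ᵥ M *ᵥ x ω ∂P = (M * K).trace := by
  have hint (i j : ι) : Integrable (fun ω => M i j * (x ω i * x ω j)) P :=
    (hx.integrable_mul i j).const_mul _
  calc ∫ ω, x ω ⬝ᵥ M *ᵥ x ω ∂P
      = ∑ i, ∑ j, M i j * ∫ ω, x ω i * x ω j ∂P := by
        simp only [dotProduct_mulVec_eq_sum]
        rw [integral_finsetSum _ fun i _ => integrable_finsetSum _ fun j _ => hint i j]
        simp only [integral_finsetSum _ fun j _ => hint _ j, integral_const_mul]
    _ = (M * K).trace := by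
        simp only [hx.integral_mul, Matrix.trace, Matrix.diag, Matrix.mul_apply, hx.isSymm.apply]

lemma integral_dotProduct_sq (hx : IsCenteredGaussianVector x K P) (c : ι → ℝ) :
    ∫ ω, (c ⬝ᵥ x ω) ^ 2 ∂P = c ⬝ᵥ K *ᵥ c := by
  have hsq (y : ι → ℝ) : (c ⬝ᵥ y) ^ 2 = y ⬝ᵥ Matrix.vecMulVec c c *ᵥ y := by
    rw [Matrix.vecMulVec_mulVec, sq, dotProduct_comm y]
    simp
  simp only [hsq, hx.integral_quadForm, Matrix.vecMulVec_mul, Matrix.trace_vecMulVec]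
  rw [dotProduct_comm, Matrix.dotProduct_mulVec]

lemma dotProduct_mulVec_nonneg (hx : IsCenteredGaussianVector x K P) (c : ι → ℝ) :
    0 ≤ c ⬝ᵥ K *ᵥ c := by
  rw [← hx.integral_dotProduct_sq]
  exact integral_nonneg fun ω => sq_nonneg _

lemma map_dotProduct (hx : IsCenteredGaussianVector x K P) (c : ι → ℝ) :
    P.map (fun ω => c ⬝ᵥ x ω) = gaussianReal 0 (c ⬝ᵥ K *ᵥ c).toNNReal := by
  have hc := hx.hasGaussianLaw_dotProduct c
  rw [hc.map_eq_gaussianReal, variance_eq_integral hc.aemeasurable, hx.integral_dotProduct]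
  simp only [sub_zero, hx.integral_dotProduct_sq]

lemma integral_dotProduct_pow_four (hx : IsCenteredGaussianVector x K P)
    (c : ι → ℝ) : ∫ ω, (c ⬝ᵥ x ω) ^ 4 ∂P = 3 * (c ⬝ᵥ K *ᵥ c) ^ 2 := by
  have h4 := integral_pow_four_gaussianReal (c ⬝ᵥ K *ᵥ c).toNNReal
  rwa [← hx.map_dotProduct, integral_map (hx.hasGaussianLaw_dotProduct c).aemeasurable
    (by fun_prop), Real.coe_toNNReal _ (hx.dotProduct_mulVec_nonneg c)] at h4

lemma memLp_mul (hx : IsCenteredGaussianVector x K P) (i j : ι) :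
    MemLp (fun ω => x ω i * x ω j) 2 P := by
  have : ENNReal.HolderTriple 4 4 2 := ⟨by
    rw [← ENNReal.add_halves (2⁻¹ : ℝ≥0∞), ENNReal.div_eq_inv_mul,
      ← ENNReal.mul_inv (by simp) (by simp)]
    norm_num⟩
  exact ((hx.hasGaussianLaw_apply j).memLp (p := 4) (by simp)).mul
    ((hx.hasGaussianLaw_apply i).memLp (p := 4) (by simp))

lemma integrable_dotProduct_pow_four (hx : IsCenteredGaussianVector x K P) (c : ι → ℝ) :
    Integrable (fun ω => (c ⬝ᵥ x ω) ^ 4) P := by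
  have hc := ((hx.hasGaussianLaw_dotProduct c).memLp (p := 4) (by simp)).integrable_norm_pow
    (by norm_num)
  simpa only [Real.norm_eq_abs, Even.pow_abs (by decide : Even 4)] using hc

-- Isserlis' formula, by polarization of the fourth moments of the forms `xᵢ ± xⱼ ± xₖ ± xₗ`.
lemma integral_mul_mul_mul (hx : IsCenteredGaussianVector x K P) (i j k l : ι) :
    ∫ ω, x ω i * x ω j * (x ω k * x ω l) ∂P = K i j * K k l + K i k * K j l + K i l * K j k := by
  classical
  let form (b c d : ℝ) : ι → ℝ :=
    Pi.single i 1 + b • Pi.single j 1 + c • Pi.single k 1 + d • Pi.single l 1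
  have hform (b c d : ℝ) (y : ι → ℝ) : form b c d ⬝ᵥ y = y i + b * y j + c * y k + d * y l := by
    simp [form]
  have hmulVec (b c d : ℝ) (m : ι) :
      (K *ᵥ form b c d) m = K m i + b * K m j + c * K m k + d * K m l := by
    simp [form, Matrix.mulVec_add, Matrix.mulVec_smul]
  let signs : Finset ℝ := {1, -1}
  have hsigns (g : ℝ → ℝ) : ∑ b ∈ signs, g b = g 1 + g (-1) := sum_pair (by norm_num)
  have hint (b c d : ℝ) : Integrable (fun ω => b * c * d / 192 * (form b c d ⬝ᵥ x ω) ^ 4) P :=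
    (hx.integrable_dotProduct_pow_four _).const_mul _
  calc ∫ ω, x ω i * x ω j * (x ω k * x ω l) ∂P
      = ∫ ω, ∑ b ∈ signs, ∑ c ∈ signs, ∑ d ∈ signs,
          b * c * d / 192 * (form b c d ⬝ᵥ x ω) ^ 4 ∂P := by
        congr 1 with ω
        simp only [hsigns, hform]
        ring
    _ = ∑ b ∈ signs, ∑ c ∈ signs, ∑ d ∈ signs,
          b * c * d / 192 * (3 * (form b c d ⬝ᵥ K *ᵥ form b c d) ^ 2) := by
        rw [integral_finsetSum _ fun b _ => integrable_finsetSum _ fun c _ =>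
          integrable_finsetSum _ fun d _ => hint b c d]
        refine sum_congr rfl fun b _ => ?_
        rw [integral_finsetSum _ fun c _ => integrable_finsetSum _ fun d _ => hint b c d]
        refine sum_congr rfl fun c _ => ?_
        rw [integral_finsetSum _ fun d _ => hint b c d]
        simp only [integral_const_mul, hx.integral_dotProduct_pow_four]
    _ = K i j * K k l + K i k * K j l + K i l * K j k := by
        simp only [hsigns, hform, hmulVec, hx.isSymm.apply i j, hx.isSymm.apply i k,
          hx.isSymm.apply i l, hx.isSymm.apply j k, hx.isSymm.apply j l, hx.isSymm.apply k l]
        ring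

lemma covariance_mul_mul (hx : IsCenteredGaussianVector x K P) (i j k l : ι) :
    cov[fun ω => x ω i * x ω j, fun ω => x ω k * x ω l; P] = K i k * K j l + K i l * K j k := by
  have := hx.isProbabilityMeasure
  rw [covariance_eq_sub (hx.memLp_mul i j) (hx.memLp_mul k l)]
  simp only [Pi.mul_apply, hx.integral_mul_mul_mul, hx.integral_mul]
  ring

lemma memLp_quadForm (hx : IsCenteredGaussianVector x K P) (M : Matrix ι ι ℝ) :
    MemLp (fun ω => x ω ⬝ᵥ M *ᵥ x ω) 2 P := by
  simp only [dotProduct_mulVec_eq_sum]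
  exact memLp_finsetSum _ fun i _ => memLp_finsetSum _ fun j _ => (hx.memLp_mul i j).const_mul _

lemma variance_quadForm (hx : IsCenteredGaussianVector x K P) {M : Matrix ι ι ℝ}
    (hM : M.IsSymm) :
    Var[fun ω => x ω ⬝ᵥ M *ᵥ x ω; P] = 2 * (M * K * (M * K)).trace := by
  have := hx.isProbabilityMeasure
  have hquad : (fun ω => x ω ⬝ᵥ M *ᵥ x ω) =
      fun ω => ∑ p : ι × ι, M p.1 p.2 * (x ω p.1 * x ω p.2) := by
    simp only [dotProduct_mulVec_eq_sum, Fintype.sum_prod_type]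
  calc Var[fun ω => x ω ⬝ᵥ M *ᵥ x ω; P]
      = ∑ p : ι × ι, ∑ q : ι × ι, M p.1 p.2 * M q.1 q.2 *
          (K p.1 q.1 * K p.2 q.2 + K p.1 q.2 * K p.2 q.1) := by
        rw [hquad, variance_fun_sum (X := fun (p : ι × ι) ω => M p.1 p.2 * (x ω p.1 * x ω p.2))
          fun p => (hx.memLp_mul p.1 p.2).const_mul _]
        simp only [covariance_const_mul_left, covariance_const_mul_right, hx.covariance_mul_mul]
        exact sum_congr rfl fun p _ => sum_congr rfl fun q _ => by ring
    _ = 2 * (M * K * (M * K)).trace := by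
        simp only [mul_add, sum_add_distrib]
        rw [sum_congr rfl fun p _ => ((Equiv.prodComm ι ι).sum_comp _).symm]
        simp only [Equiv.prodComm_apply, Prod.fst_swap, Prod.snd_swap, hM.apply, ← two_mul,
          trace_mul_mul_mul_eq_sum M hx.isSymm]

end IsCenteredGaussianVector

/-! ### Mixtures of centred Gaussian laws and Gaussian bilinear forms -/

section Mixture

variable {Ω α β : Type*} [MeasurableSpace Ω] [MeasurableSpace α] [MeasurableSpace β]
  {P : Measure Ω} [IsProbabilityMeasure P]

lemma integral_abs_sub_le_sqrt_variance_add_sq {f : Ω → ℝ} (hf : MemLp f 2 P) (w : ℝ) :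
    ∫ ω, |f ω - w| ∂P ≤ √(Var[f; P] + (∫ ω, f ω ∂P - w) ^ 2) := by
  have hfw : MemLp (fun ω => f ω - w) 2 P := hf.sub (memLp_const w)
  have hvar_abs := variance_eq_sub hfw.abs
  have hvar := variance_eq_sub hfw
  rw [variance_sub_const hf.aestronglyMeasurable,
    integral_sub (hf.integrable one_le_two) (integrable_const w), integral_const] at hvar
  refine Real.le_sqrt_of_sq_le ?_
  have hnonneg := variance_nonneg |fun ω => f ω - w| P
  simp only [Pi.pow_apply, Pi.abs_apply, sq_abs, probReal_univ, one_smul] at hvar hvar_abs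
  linarith

variable {μ : Measure α} {ν : Measure β} [IsProbabilityMeasure μ] [IsProbabilityMeasure ν]

lemma mul_abs_measureReal_map_prod_sub_gaussianReal_le {f : α × β → ℝ} (hf : Measurable f)
    {V : α → ℝ≥0} (hV : Integrable (fun a => (V a : ℝ)) μ)
    (hlaw : ∀ a, ν.map (fun b => f (a, b)) = gaussianReal 0 (V a)) (w : ℝ≥0) {s : Set ℝ}
    (hs : MeasurableSet s) :
    w * |((μ.prod ν).map f).real s - (gaussianReal 0 w).real s| ≤ ∫ a, |(V a : ℝ) - w| ∂μ := by
  have hfs : MeasurableSet (f ⁻¹' s) := hf hs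
  have hfib (a : α) : ν.real (Prod.mk a ⁻¹' (f ⁻¹' s)) = (gaussianReal 0 (V a)).real s := by
    rw [← hlaw a, map_measureReal_apply (by fun_prop) hs, Set.preimage_preimage]
  have hint : Integrable (fun a => (gaussianReal 0 (V a)).real s) μ := by
    simpa only [← hfib] using Measure.integrable_measure_prodMk_left hfs (measure_ne_top _ _)
  have hmix : ((μ.prod ν).map f).real s = ∫ a, (gaussianReal 0 (V a)).real s ∂μ := by
    rw [map_measureReal_apply hf hs, measureReal_def, Measure.prod_apply hfs,
      ← integral_toReal (measurable_measure_prodMk_left hfs).aemeasurable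
        (ae_of_all _ fun _ => measure_lt_top _ _)]
    simp only [← measureReal_def, hfib]
  calc w * |((μ.prod ν).map f).real s - (gaussianReal 0 w).real s|
      = w * |∫ a, ((gaussianReal 0 (V a)).real s - (gaussianReal 0 w).real s) ∂μ| := by
        rw [hmix, integral_sub hint (integrable_const _), integral_const, probReal_univ, one_smul]
    _ ≤ w * ∫ a, |(gaussianReal 0 (V a)).real s - (gaussianReal 0 w).real s| ∂μ := by
        gcongr
        exact abs_integral_le_integral_abs
    _ = ∫ a, w * |(gaussianReal 0 (V a)).real s - (gaussianReal 0 w).real s| ∂μ :=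
        (integral_const_mul _ _).symm
    _ ≤ ∫ a, |(V a : ℝ) - w| ∂μ :=
        integral_mono ((hint.sub (integrable_const _)).abs.const_mul _)
          (hV.sub (integrable_const _)).abs
          fun a => mul_abs_measureReal_gaussianReal_sub_le 0 (V a) w hs

lemma mul_abs_measureReal_map_sub_gaussianReal_le_of_indepFun {U : Ω → α} {W : Ω → β}
    (hU : AEMeasurable U P) (hW : AEMeasurable W P) (hUW : IndepFun U W P) {f : α × β → ℝ}
    (hf : Measurable f) {V : α → ℝ≥0} (hV : Measurable V)
    (hVint : Integrable (fun ω => (V (U ω) : ℝ)) P)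
    (hlaw : ∀ u, P.map (fun ω => f (u, W ω)) = gaussianReal 0 (V u)) (w : ℝ≥0) {s : Set ℝ}
    (hs : MeasurableSet s) :
    w * |(P.map fun ω => f (U ω, W ω)).real s - (gaussianReal 0 w).real s| ≤
      ∫ ω, |(V (U ω) : ℝ) - w| ∂P := by
  have := Measure.isProbabilityMeasure_map hU
  have := Measure.isProbabilityMeasure_map hW
  have hmap : P.map (fun ω => f (U ω, W ω)) = ((P.map U).prod (P.map W)).map f := by
    rw [← (indepFun_iff_map_prod_eq_prod_map_map hU hW).1 hUW,
      AEMeasurable.map_map_of_aemeasurable hf.aemeasurable (hU.prodMk hW), Function.comp_def]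
  have hlaw' (u : α) : (P.map W).map (fun b => f (u, b)) = gaussianReal 0 (V u) := by
    rw [AEMeasurable.map_map_of_aemeasurable (by fun_prop) hW, ← hlaw u, Function.comp_def]
  have hVint' : Integrable (fun u => (V u : ℝ)) (P.map U) :=
    (integrable_map_measure (by fun_prop) hU).2 hVint
  rw [hmap, ← integral_map hU (f := fun u => |(V u : ℝ) - w|) (by fun_prop)]
  exact mul_abs_measureReal_map_prod_sub_gaussianReal_le hf hVint' hlaw' w hs

end Mixture

section BilinearForm

variable {Ω ι κ : Type*} [MeasurableSpace Ω] [Fintype ι] [Fintype κ] {P : Measure Ω}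
  {U : Ω → ι → ℝ} {W : Ω → κ → ℝ} {S : Matrix ι ι ℝ} {K : Matrix κ κ ℝ}

-- Given `U`, the bilinear form is centred Gaussian with variance `U ⬝ᵥ (A * K * Aᵀ) *ᵥ U`.
theorem IsCenteredGaussianVector.mul_abs_measureReal_bilinForm_sub_gaussianReal_le
    (hU : IsCenteredGaussianVector U S P) (hW : IsCenteredGaussianVector W K P)
    (hUW : IndepFun U W P) (A : Matrix ι κ ℝ) (w : ℝ≥0) {s : Set ℝ} (hs : MeasurableSet s) :
    w * |(P.map fun ω => U ω ⬝ᵥ A *ᵥ W ω).real s - (gaussianReal 0 w).real s| ≤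
      √(2 * (A * K * Aᵀ * S * (A * K * Aᵀ * S)).trace + ((A * K * Aᵀ * S).trace - w) ^ 2) := by
  have := hU.isProbabilityMeasure
  set M := A * K * Aᵀ with hM_def
  have hM : M.IsSymm := by
    simp only [hM_def, Matrix.IsSymm, Matrix.transpose_mul, Matrix.transpose_transpose,
      hW.isSymm.eq, Matrix.mul_assoc]
  have hquad (u : ι → ℝ) : u ⬝ᵥ M *ᵥ u = (u ᵥ* A) ⬝ᵥ K *ᵥ (u ᵥ* A) := by
    simp only [hM_def, Matrix.dotProduct_mulVec, ← Matrix.mulVec_mulVec, Matrix.mulVec_transpose]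
  have hnonneg (u : ι → ℝ) : 0 ≤ u ⬝ᵥ M *ᵥ u := hquad u ▸ hW.dotProduct_mulVec_nonneg _
  have hlaw (u : ι → ℝ) : P.map (fun ω => u ⬝ᵥ A *ᵥ W ω) =
      gaussianReal 0 (u ⬝ᵥ M *ᵥ u).toNNReal := by
    rw [hquad, ← hW.map_dotProduct]
    simp only [Matrix.dotProduct_mulVec]
  have hL2 := hU.memLp_quadForm M
  have hmix := mul_abs_measureReal_map_sub_gaussianReal_le_of_indepFun
    hU.hasGaussianLaw.aemeasurable hW.hasGaussianLaw.aemeasurable hUW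
    (f := fun p => p.1 ⬝ᵥ A *ᵥ p.2) (by fun_prop) (V := fun u => (u ⬝ᵥ M *ᵥ u).toNNReal)
    (by fun_prop) (by simpa only [Real.coe_toNNReal _ (hnonneg _)] using hL2.integrable one_le_two)
    hlaw w hs
  simp only [Real.coe_toNNReal _ (hnonneg _)] at hmix
  rw [← hU.variance_quadForm hM, ← hU.integral_quadForm]
  exact hmix.trans (integral_abs_sub_le_sqrt_variance_add_sq hL2 w)

end BilinearForm

/-! ### Traces and the centring matrix -/

section CenteringMatrix

open scoped Matrix.Norms.Operator

variable {n : ℕ}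

lemma sum_abs_apply_le_norm {ι κ : Type*} [Fintype ι] [Fintype κ] (A : Matrix ι κ ℝ) (i : ι) :
    ∑ j, |A i j| ≤ ‖A‖ := by
  rw [Matrix.linfty_opNorm_def]
  have hle := Finset.le_sup (f := fun i => ∑ j, ‖A i j‖₊) (mem_univ i)
  calc ∑ j, |A i j| = ((∑ j, ‖A i j‖₊ : ℝ≥0) : ℝ) := by simp
    _ ≤ _ := NNReal.coe_le_coe.2 hle

lemma norm_le_of_sum_abs_apply_le {ι κ : Type*} [Fintype ι] [Fintype κ] {A : Matrix ι κ ℝ} {r : ℝ}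
    (hr : 0 ≤ r) (hA : ∀ i, ∑ j, |A i j| ≤ r) : ‖A‖ ≤ r := by
  lift r to ℝ≥0 using hr
  rw [Matrix.linfty_opNorm_def, NNReal.coe_le_coe]
  refine Finset.sup_le fun i _ => NNReal.coe_le_coe.1 ?_
  simpa using hA i

lemma abs_trace_mul_le {ι κ : Type*} [Fintype ι] [Fintype κ] (A : Matrix ι κ ℝ)
    {B : Matrix κ ι ℝ} {b : ℝ} (hb : 0 ≤ b) (hB : ∀ i j, |B i j| ≤ b) :
    |(A * B).trace| ≤ Fintype.card ι * (‖A‖ * b) := by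
  have hrow (i : ι) : |(A * B) i i| ≤ ‖A‖ * b := by
    calc |(A * B) i i| ≤ ∑ j, |A i j| * b := by
          rw [Matrix.mul_apply]
          refine (abs_sum_le_sum_abs _ _).trans (sum_le_sum fun j _ => ?_)
          rw [abs_mul]
          gcongr
          exact hB j i
      _ ≤ ‖A‖ * b := by
          rw [← sum_mul]
          gcongr
          exact sum_abs_apply_le_norm A i
  calc |(A * B).trace| ≤ ∑ i, |(A * B) i i| := abs_sum_le_sum_abs _ _
    _ ≤ ∑ _i : ι, ‖A‖ * b := sum_le_sum fun i _ => hrow i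
    _ = Fintype.card ι * (‖A‖ * b) := by simp

/-- The orthogonal projection of `ℝⁿ` onto the constant vectors: `averagingMatrix n *ᵥ x` has all
its coordinates equal to the mean of `x`. -/
def averagingMatrix (n : ℕ) : Matrix (Fin n) (Fin n) ℝ := Matrix.of fun _ _ => (n : ℝ)⁻¹

/-- The orthogonal projection of `ℝⁿ` away from the constant vectors: `centeringMatrix n *ᵥ x` is
`x` minus its mean, so that `x ⬝ᵥ centeringMatrix n *ᵥ y` is `n` times an empirical covariance. -/
def centeringMatrix (n : ℕ) : Matrix (Fin n) (Fin n) ℝ := 1 - averagingMatrix n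

lemma norm_averagingMatrix_le_one (n : ℕ) : ‖averagingMatrix n‖ ≤ 1 := by
  refine norm_le_of_sum_abs_apply_le zero_le_one fun i => ?_
  have : NeZero n := ⟨by rintro rfl; exact i.elim0⟩
  simp [averagingMatrix]

lemma norm_centeringMatrix_le_two (n : ℕ) : ‖centeringMatrix n‖ ≤ 2 := by
  have hone : ‖(1 : Matrix (Fin n) (Fin n) ℝ)‖ ≤ 1 :=
    norm_le_of_sum_abs_apply_le zero_le_one fun i => by simp [Matrix.one_apply, apply_ite abs]
  calc ‖centeringMatrix n‖
      ≤ ‖(1 : Matrix (Fin n) (Fin n) ℝ)‖ + ‖averagingMatrix n‖ := norm_sub_le _ _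
    _ ≤ 2 := by linarith [norm_averagingMatrix_le_one n]

lemma transpose_centeringMatrix (n : ℕ) : (centeringMatrix n)ᵀ = centeringMatrix n := by
  ext i j
  simp [centeringMatrix, averagingMatrix, Matrix.one_apply, eq_comm]

lemma abs_trace_averagingMatrix_mul_le (B : Matrix (Fin n) (Fin n) ℝ) :
    |(averagingMatrix n * B).trace| ≤ ‖B‖ := by
  rw [Matrix.trace_mul_comm]
  calc |(B * averagingMatrix n).trace| ≤ n * (‖B‖ * (n : ℝ)⁻¹) := by
        simpa using abs_trace_mul_le B (B := averagingMatrix n) (by positivity)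
          fun _ _ => (abs_of_nonneg (by positivity : (0 : ℝ) ≤ (n : ℝ)⁻¹)).le
    _ = ‖B‖ * ((n : ℝ) * (n : ℝ)⁻¹) := by ring
    _ ≤ ‖B‖ := mul_le_of_le_one_right (norm_nonneg B) mul_inv_le_one

-- Averaging has rank one, so removing it changes traces by bounded amounts.
lemma abs_trace_centeringMatrix_mul_sq_sub_le (K : Matrix (Fin n) (Fin n) ℝ) :
    |(centeringMatrix n * K * (centeringMatrix n * K)).trace - (K * K).trace| ≤ 3 * ‖K‖ ^ 2 := by
  set E := averagingMatrix n
  have hE : ‖E‖ ≤ 1 := norm_averagingMatrix_le_one n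
  have hexpand : (centeringMatrix n * K * (centeringMatrix n * K)).trace - (K * K).trace =
      (E * (K * E * K)).trace - 2 * (E * (K * K)).trace := by
    have hcomm := Matrix.trace_mul_comm K (E * K)
    simp only [centeringMatrix, E, sub_mul, mul_sub, one_mul, Matrix.trace_sub, mul_assoc] at *
    linarith
  have hEK : ‖E * K‖ ≤ ‖K‖ := (norm_mul_le _ _).trans (mul_le_of_le_one_left (norm_nonneg _) hE)
  have hKK : |(E * (K * K)).trace| ≤ ‖K‖ ^ 2 :=
    (abs_trace_averagingMatrix_mul_le _).trans ((norm_mul_le _ _).trans_eq (sq _).symm)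
  have hKEK : |(E * (K * E * K)).trace| ≤ ‖K‖ ^ 2 := by
    refine (abs_trace_averagingMatrix_mul_le _).trans ?_
    rw [mul_assoc, sq]
    exact (norm_mul_le _ _).trans (by gcongr)
  rw [hexpand, abs_le]
  rw [abs_le] at hKK hKEK
  constructor <;> linarith

lemma trace_centeringMatrix_mul_pow_four_le {K : Matrix (Fin n) (Fin n) ℝ} {κ : ℝ} (hκ : 0 ≤ κ)
    (hK : ∀ i j, |K i j| ≤ κ) :
    ((centeringMatrix n * K) ^ 4).trace ≤ n * (16 * ‖K‖ ^ 3 * κ) := by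
  set C := centeringMatrix n
  have hC : ‖C‖ ≤ 2 := norm_centeringMatrix_le_two n
  have hnorm : ‖(C * K) ^ 3 * C‖ ≤ 16 * ‖K‖ ^ 3 := by
    calc ‖(C * K) ^ 3 * C‖ ≤ (‖C‖ * ‖K‖) ^ 3 * ‖C‖ := by
          refine (norm_mul_le _ _).trans ?_
          gcongr
          exact (norm_pow_le' _ (by norm_num)).trans (by gcongr; exact norm_mul_le _ _)
      _ ≤ (2 * ‖K‖) ^ 3 * 2 := by gcongr
      _ = 16 * ‖K‖ ^ 3 := by ring
  calc ((C * K) ^ 4).trace ≤ |((C * K) ^ 3 * C * K).trace| := by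
        rw [mul_assoc, ← pow_succ]
        exact le_abs_self _
    _ ≤ n * (‖(C * K) ^ 3 * C‖ * κ) := by
        simpa using abs_trace_mul_le ((C * K) ^ 3 * C) hκ hK
    _ ≤ n * (16 * ‖K‖ ^ 3 * κ) := by gcongr

end CenteringMatrix

/-! ### Geometric sums -/

section GeometricSum

variable {r : ℝ} {n : ℕ}

lemma one_sub_mul_sum_pow_dist (r : ℝ) {i : ℕ} (hi : i < n) :
    (1 - r) * ∑ j ∈ range n, r ^ i.dist j = 1 + r - r ^ (i + 1) - r ^ (n - i) := by
  obtain ⟨m, rfl⟩ := Nat.exists_eq_add_of_lt hi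
  have hleft : ∑ j ∈ range (i + 1), r ^ i.dist j = ∑ j ∈ range (i + 1), r ^ j := by
    rw [← sum_range_reflect]
    refine sum_congr rfl fun j hj => ?_
    rw [Nat.dist_eq_sub_of_le_right (by omega)]
    congr 1
    have := mem_range.1 hj
    omega
  have hright (j : ℕ) : r ^ i.dist (i + 1 + j) = r * r ^ j := by
    rw [Nat.dist_eq_sub_of_le (by omega), ← pow_succ']
    congr 1
    omega
  have hpow : i + m + 1 - i = m + 1 := by omega
  rw [add_right_comm, sum_range_add, hleft, sum_congr rfl fun j _ => hright j, ← mul_sum, mul_add,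
    mul_left_comm, mul_neg_geom_sum, mul_neg_geom_sum, add_right_comm, hpow]
  ring

lemma geom_sum_le_inv_one_sub (h0 : 0 ≤ r) (h1 : r < 1) (n : ℕ) :
    ∑ k ∈ range n, r ^ k ≤ (1 - r)⁻¹ := by
  rw [← tsum_geometric_of_lt_one h0 h1]
  exact (summable_geometric_of_lt_one h0 h1).sum_le_tsum _ fun k _ => by positivity

lemma sum_pow_dist_le (h0 : 0 ≤ r) (h1 : r < 1) {i : ℕ} (hi : i < n) :
    ∑ j ∈ range n, r ^ i.dist j ≤ 2 / (1 - r) := by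
  rw [le_div_iff₀' (sub_pos.2 h1), one_sub_mul_sum_pow_dist r hi]
  linarith [pow_nonneg h0 (i + 1), pow_nonneg h0 (n - i)]

lemma abs_sum_sum_pow_dist_sub_le (h0 : 0 ≤ r) (h1 : r < 1) (n : ℕ) :
    |∑ i ∈ range n, ∑ j ∈ range n, r ^ i.dist j - n * ((1 + r) / (1 - r))| ≤
      2 / (1 - r) ^ 2 := by
  have h1r : 0 < 1 - r := sub_pos.2 h1
  have hreflect : ∑ i ∈ range n, r ^ (n - i) = ∑ i ∈ range n, r ^ (i + 1) := by
    rw [← sum_range_reflect]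
    refine sum_congr rfl fun i hi => ?_
    congr 1
    have := mem_range.1 hi
    omega
  have hsum : (1 - r) * ∑ i ∈ range n, ∑ j ∈ range n, r ^ i.dist j =
      n * (1 + r) - 2 * (r * ∑ i ∈ range n, r ^ i) := by
    rw [mul_sum, sum_congr rfl fun i hi => one_sub_mul_sum_pow_dist r (mem_range.1 hi),
      sum_sub_distrib, sum_sub_distrib, hreflect, sum_const, card_range, nsmul_eq_mul]
    simp only [pow_succ', ← mul_sum]
    ring
  have hgeom := geom_sum_le_inv_one_sub h0 h1 n
  calc _ = |-(2 * (r * ∑ i ∈ range n, r ^ i) / (1 - r))| := by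
        congr 1
        field_simp
        linarith
    _ = 2 * (r * ∑ i ∈ range n, r ^ i) / (1 - r) := by
        rw [abs_neg, abs_of_nonneg (by positivity)]
    _ ≤ 2 * (1 * (1 - r)⁻¹) / (1 - r) := by gcongr
    _ = 2 / (1 - r) ^ 2 := by field_simp

end GeometricSum

/-! ### The Ornstein–Uhlenbeck covariance on a grid -/

section GridCovariance

open scoped Matrix.Norms.Operator

lemma one_sub_exp_neg_inv_le {x : ℝ} (h0 : 0 < x) (h1 : x ≤ 1) :
    (1 - exp (-x))⁻¹ ≤ 2 / x := by
  have hexp : exp (-x) ≤ (1 + x)⁻¹ := by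
    rw [exp_neg]
    exact inv_anti₀ (by linarith) (by linarith [add_one_le_exp x])
  have hhalf : x / 2 ≤ 1 - (1 + x)⁻¹ := by
    field_simp
    nlinarith
  rw [← inv_div]
  exact inv_anti₀ (by positivity) (by linarith)

lemma abs_mul_one_add_exp_div_sub_one_le {x : ℝ} (hx : 0 < x) :
    |x * ((1 + exp (-(2 * x))) / (1 - exp (-(2 * x)))) - 1| ≤ x := by
  have hlt : 0 < 1 - exp (-(2 * x)) := sub_pos.2 (exp_lt_one_iff.2 (by linarith))
  have hlower : 1 - 2 * x ≤ exp (-(2 * x)) := one_sub_le_exp_neg _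
  have hupper : (1 + 2 * x) * exp (-(2 * x)) ≤ 1 := by
    rw [exp_neg, mul_inv_le_iff₀ (exp_pos _), one_mul]
    linarith [add_one_le_exp (2 * x)]
  rw [abs_le, mul_div_assoc', neg_le_sub_iff_le_add, sub_le_iff_le_add, div_le_iff₀ hlt,
    ← sub_le_iff_le_add, le_div_iff₀ hlt]
  constructor <;> nlinarith

/-- The covariance matrix of an Ornstein–Uhlenbeck process with parameter `θ`, started at `0`, at
the grid points `0, Δ, …, (n - 1) Δ`. -/
def ouGridCovariance (θ Δ : ℝ) (n : ℕ) : Matrix (Fin n) (Fin n) ℝ :=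
  Matrix.of fun i j =>
    (exp (-(θ * Δ)) ^ (i : ℕ).dist j - exp (-(θ * Δ)) ^ (i + j : ℕ)) / (2 * θ)

variable {θ Δ : ℝ} {n : ℕ}

lemma ouGridCovariance_apply (hΔ : 0 ≤ Δ) (i j : Fin n) :
    ouGridCovariance θ Δ n i j =
      (exp (-θ * |(j : ℝ) * Δ - i * Δ|) - exp (-θ * (j * Δ + i * Δ))) / (2 * θ) := by
  have hdist : (((i : ℕ).dist j : ℕ) : ℝ) = |(j : ℝ) - i| := by
    rw [Nat.dist_comm]
    simp only [Nat.dist, Nat.cast_add]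
    rcases le_total (i : ℕ) j with hij | hij
    · rw [Nat.cast_sub hij, Nat.sub_eq_zero_of_le hij, abs_of_nonneg (by simpa using hij)]
      simp
    · rw [Nat.cast_sub hij, Nat.sub_eq_zero_of_le hij, abs_of_nonpos (by simpa using hij)]
      simp
  rw [ouGridCovariance, Matrix.of_apply, ← exp_nat_mul, ← exp_nat_mul, hdist, ← sub_mul, abs_mul,
    abs_of_nonneg hΔ]
  push_cast
  ring_nf

lemma ouGridCovariance_comm (i j : Fin n) :
    ouGridCovariance θ Δ n i j = ouGridCovariance θ Δ n j i := by
  simp only [ouGridCovariance, Matrix.of_apply, Nat.dist_comm, add_comm]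

lemma exp_pow_add_le_exp_pow_dist (h : 0 ≤ θ * Δ) (i j : ℕ) :
    exp (-(θ * Δ)) ^ (i + j) ≤ exp (-(θ * Δ)) ^ i.dist j :=
  pow_le_pow_of_le_one (exp_nonneg _) (exp_le_one_iff.2 (by linarith))
    (by simp only [Nat.dist]; omega)

lemma ouGridCovariance_nonneg (hθ : 0 < θ) (hΔ : 0 < Δ) (i j : Fin n) :
    0 ≤ ouGridCovariance θ Δ n i j :=
  div_nonneg (sub_nonneg.2 (exp_pow_add_le_exp_pow_dist (by positivity) _ _)) (by positivity)

lemma ouGridCovariance_le (hθ : 0 < θ) (i j : Fin n) :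
    ouGridCovariance θ Δ n i j ≤ exp (-(θ * Δ)) ^ (i : ℕ).dist j / (2 * θ) := by
  rw [ouGridCovariance, Matrix.of_apply]
  gcongr
  exact sub_le_self _ (by positivity)

lemma abs_ouGridCovariance_le (hθ : 0 < θ) (hΔ : 0 < Δ) (i j : Fin n) :
    |ouGridCovariance θ Δ n i j| ≤ 1 / (2 * θ) := by
  rw [abs_of_nonneg (ouGridCovariance_nonneg hθ hΔ i j)]
  refine (ouGridCovariance_le hθ i j).trans ?_
  gcongr
  exact pow_le_one₀ (exp_nonneg _) (exp_le_one_iff.2 (by linarith [mul_pos hθ hΔ]))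

lemma norm_ouGridCovariance_le (hθ : 0 < θ) (hΔ : 0 < Δ) (hθΔ : θ * Δ ≤ 1) :
    ‖ouGridCovariance θ Δ n‖ ≤ 2 / θ ^ 2 / Δ := by
  refine norm_le_of_sum_abs_apply_le (by positivity) fun i => ?_
  have hx : 0 < θ * Δ := by positivity
  have hinv := one_sub_exp_neg_inv_le hx hθΔ
  set r := exp (-(θ * Δ))
  have h1 : r < 1 := exp_lt_one_iff.2 (by linarith)
  calc ∑ j, |ouGridCovariance θ Δ n i j|
      ≤ ∑ j : Fin n, r ^ (i : ℕ).dist j / (2 * θ) := by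
        refine sum_le_sum fun j _ => ?_
        rw [abs_of_nonneg (ouGridCovariance_nonneg hθ hΔ i j)]
        exact ouGridCovariance_le hθ i j
    _ = (∑ j ∈ range n, r ^ (i : ℕ).dist j) / (2 * θ) := by
        rw [Fin.sum_univ_eq_sum_range fun j => r ^ (i : ℕ).dist j / (2 * θ), sum_div]
    _ ≤ 2 * (1 - r)⁻¹ / (2 * θ) := by
        gcongr
        exact sum_pow_dist_le (exp_nonneg _) h1 i.2
    _ ≤ 2 * (2 / (θ * Δ)) / (2 * θ) := by gcongr
    _ = 2 / θ ^ 2 / Δ := by field_simp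

lemma abs_sq_ouGridCovariance_sub_le (hθ : 0 < θ) (hΔ : 0 < Δ) (i j : Fin n) :
    |4 * θ ^ 2 * ouGridCovariance θ Δ n i j ^ 2 - exp (-(2 * (θ * Δ))) ^ (i : ℕ).dist j| ≤
      2 * (exp (-(θ * Δ)) ^ (i : ℕ) * exp (-(θ * Δ)) ^ (j : ℕ)) := by
  have hle := exp_pow_add_le_exp_pow_dist (mul_pos hθ hΔ).le i j
  have hsq : exp (-(2 * (θ * Δ))) = exp (-(θ * Δ)) ^ 2 := by
    rw [← exp_nat_mul]
    push_cast
    ring_nf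
  rw [ouGridCovariance, Matrix.of_apply, hsq, ← pow_add, pow_right_comm]
  set a := exp (-(θ * Δ)) ^ (i : ℕ).dist j
  set b := exp (-(θ * Δ)) ^ (i + j : ℕ)
  have hb : 0 ≤ b := by positivity
  have ha : a ≤ 1 := pow_le_one₀ (exp_nonneg _) (exp_le_one_iff.2 (by linarith [mul_pos hθ hΔ]))
  have hab : 4 * θ ^ 2 * ((a - b) / (2 * θ)) ^ 2 - a ^ 2 = b * (b - 2 * a) := by
    field_simp
    ring
  rw [hab, abs_le]
  constructor <;> nlinarith

lemma abs_trace_ouGridCovariance_mul_self_sub_le (hθ : 0 < θ) (hΔ : 0 < Δ) :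
    |4 * θ ^ 2 * (ouGridCovariance θ Δ n * ouGridCovariance θ Δ n).trace -
      ∑ i ∈ range n, ∑ j ∈ range n, exp (-(2 * (θ * Δ))) ^ i.dist j| ≤
      2 * ((1 - exp (-(θ * Δ)))⁻¹) ^ 2 := by
  set r := exp (-(θ * Δ))
  set q := exp (-(2 * (θ * Δ)))
  have htrace : (ouGridCovariance θ Δ n * ouGridCovariance θ Δ n).trace =
      ∑ i, ∑ j, ouGridCovariance θ Δ n i j ^ 2 := by
    simp only [Matrix.trace, Matrix.diag, Matrix.mul_apply]
    exact sum_congr rfl fun i _ => sum_congr rfl fun j _ => by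
      rw [ouGridCovariance_comm j i, sq]
  have hq : ∑ i ∈ range n, ∑ j ∈ range n, q ^ i.dist j =
      ∑ i : Fin n, ∑ j : Fin n, q ^ (i : ℕ).dist j := by
    simp only [sum_range]
  have hgeom : ∑ k : Fin n, r ^ (k : ℕ) ≤ (1 - r)⁻¹ := by
    rw [Fin.sum_univ_eq_sum_range (fun k => r ^ k)]
    exact geom_sum_le_inv_one_sub (exp_nonneg _) (exp_lt_one_iff.2 (by linarith [mul_pos hθ hΔ])) n
  rw [htrace, hq]
  calc _ = |∑ i : Fin n, ∑ j : Fin n,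
          (4 * θ ^ 2 * ouGridCovariance θ Δ n i j ^ 2 - q ^ (i : ℕ).dist j)| := by
        simp only [mul_sum, sum_sub_distrib]
    _ ≤ ∑ i : Fin n, ∑ j : Fin n, 2 * (r ^ (i : ℕ) * r ^ (j : ℕ)) := by
        refine (abs_sum_le_sum_abs _ _).trans (sum_le_sum fun i _ => ?_)
        refine (abs_sum_le_sum_abs _ _).trans (sum_le_sum fun j _ => ?_)
        exact abs_sq_ouGridCovariance_sub_le hθ hΔ i j
    _ = 2 * (∑ k : Fin n, r ^ (k : ℕ)) ^ 2 := by
        rw [sq, sum_mul_sum]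
        simp only [mul_sum]
    _ ≤ 2 * ((1 - r)⁻¹) ^ 2 := by gcongr

lemma abs_sq_mul_trace_ouGridCovariance_sub_le (hθ : 0 < θ) (hΔ : 0 < Δ) (hθΔ : θ * Δ ≤ 1)
    (hn : n * Δ ^ 2 ≤ 1) :
    |Δ ^ 2 * (ouGridCovariance θ Δ n * ouGridCovariance θ Δ n).trace - n * Δ / (4 * θ ^ 3)| ≤
      1 / (4 * θ ^ 2) + 4 / θ ^ 4 := by
  have hx : 0 < θ * Δ := by positivity
  have hinv := one_sub_exp_neg_inv_le hx hθΔ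
  have htrace := abs_trace_ouGridCovariance_mul_self_sub_le (n := n) hθ hΔ
  have hsum := abs_sum_sum_pow_dist_sub_le (exp_nonneg (-(2 * (θ * Δ))))
    (exp_lt_one_iff.2 (by linarith)) n
  have hcoth := abs_mul_one_add_exp_div_sub_one_le hx
  have hr : 0 < 1 - exp (-(θ * Δ)) := sub_pos.2 (exp_lt_one_iff.2 (by linarith))
  have hqr : exp (-(2 * (θ * Δ))) ≤ exp (-(θ * Δ)) := exp_le_exp.2 (by linarith)
  set t := (ouGridCovariance θ Δ n * ouGridCovariance θ Δ n).trace
  set g := (1 + exp (-(2 * (θ * Δ)))) / (1 - exp (-(2 * (θ * Δ))))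
  have hsquare : ((1 - exp (-(θ * Δ)))⁻¹) ^ 2 ≤ (2 / (θ * Δ)) ^ 2 := by gcongr
  have hsquare' : 2 / (1 - exp (-(2 * (θ * Δ)))) ^ 2 ≤ 2 * ((1 - exp (-(θ * Δ)))⁻¹) ^ 2 := by
    rw [inv_pow, ← div_eq_mul_inv]
    gcongr
  have hbulk : |4 * θ ^ 2 * t - n * g| ≤ 4 * (2 / (θ * Δ)) ^ 2 := by
    refine (abs_sub_le _ _ _).trans ((add_le_add htrace hsum).trans ?_)
    linarith
  calc |Δ ^ 2 * t - n * Δ / (4 * θ ^ 3)|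
      = |Δ ^ 2 / (4 * θ ^ 2) * (4 * θ ^ 2 * t - n * g) +
          n * Δ / (4 * θ ^ 3) * (θ * Δ * g - 1)| := by
        congr 1
        field_simp
        ring
    _ ≤ Δ ^ 2 / (4 * θ ^ 2) * (4 * (2 / (θ * Δ)) ^ 2) + n * Δ / (4 * θ ^ 3) * (θ * Δ) := by
        refine (abs_add_le _ _).trans ?_
        rw [abs_mul, abs_mul, abs_of_nonneg (by positivity : 0 ≤ Δ ^ 2 / (4 * θ ^ 2)),
          abs_of_nonneg (by positivity : 0 ≤ n * Δ / (4 * θ ^ 3))]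
        gcongr
    _ = n * Δ ^ 2 / (4 * θ ^ 2) + 4 / θ ^ 4 := by
        field_simp
        ring
    _ ≤ 1 / (4 * θ ^ 2) + 4 / θ ^ 4 := by gcongr

/-- The constant in the bound on the Kolmogorov distance for the empirical covariance of two
independent Ornstein–Uhlenbeck processes with parameter `θ`: the prefactor is the inverse of the
limiting variance, the summands come from the spread and the bias of the conditional variance. -/
def ouRateConstant (θ : ℝ) : ℝ :=
  4 * θ ^ 3 * √(128 / θ ^ 7 + (1 / (4 * θ ^ 2) + 16 / θ ^ 4) ^ 2)

lemma abs_sq_mul_trace_centeringMatrix_mul_sub_le (hθ : 0 < θ) (hΔ : 0 < Δ) (hθΔ : θ * Δ ≤ 1)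
    (hn : n * Δ ^ 2 ≤ 1) :
    |Δ ^ 2 * (centeringMatrix n * ouGridCovariance θ Δ n *
        (centeringMatrix n * ouGridCovariance θ Δ n)).trace - n * Δ / (4 * θ ^ 3)| ≤
      1 / (4 * θ ^ 2) + 16 / θ ^ 4 := by
  have huncentred := abs_sq_mul_trace_ouGridCovariance_sub_le hθ hΔ hθΔ hn
  have hcentre := abs_trace_centeringMatrix_mul_sq_sub_le (ouGridCovariance θ Δ n)
  have hnorm := norm_ouGridCovariance_le (n := n) hθ hΔ hθΔ
  set K := ouGridCovariance θ Δ n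
  set t := (centeringMatrix n * K * (centeringMatrix n * K)).trace
  have hrank : |Δ ^ 2 * t - Δ ^ 2 * (K * K).trace| ≤ 12 / θ ^ 4 := by
    calc |Δ ^ 2 * t - Δ ^ 2 * (K * K).trace| = Δ ^ 2 * |t - (K * K).trace| := by
          rw [← mul_sub, abs_mul, abs_of_nonneg (sq_nonneg Δ)]
      _ ≤ Δ ^ 2 * (3 * (2 / θ ^ 2 / Δ) ^ 2) := by
          gcongr
          exact hcentre.trans (by gcongr)
      _ = 12 / θ ^ 4 := by
          field_simp
          norm_num
  refine (abs_sub_le _ _ _).trans ((add_le_add hrank huncentred).trans_eq ?_)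
  ring

lemma pow_four_mul_trace_centeringMatrix_mul_pow_four_le (hθ : 0 < θ) (hΔ : 0 < Δ)
    (hθΔ : θ * Δ ≤ 1) :
    Δ ^ 4 * ((centeringMatrix n * ouGridCovariance θ Δ n) ^ 4).trace ≤
      n * Δ * (64 / θ ^ 7) := by
  have hnorm := norm_ouGridCovariance_le (n := n) hθ hΔ hθΔ
  calc Δ ^ 4 * ((centeringMatrix n * ouGridCovariance θ Δ n) ^ 4).trace
      ≤ Δ ^ 4 * (n * (16 * ‖ouGridCovariance θ Δ n‖ ^ 3 * (1 / (2 * θ)))) := by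
        gcongr
        exact trace_centeringMatrix_mul_pow_four_le (by positivity) (abs_ouGridCovariance_le hθ hΔ)
    _ ≤ Δ ^ 4 * (n * (16 * (2 / θ ^ 2 / Δ) ^ 3 * (1 / (2 * θ)))) := by gcongr
    _ = n * Δ * (64 / θ ^ 7) := by
        field_simp
        ring

lemma smul_centeringMatrix_mul_mul_transpose_mul (a : ℝ) (K : Matrix (Fin n) (Fin n) ℝ) :
    a • centeringMatrix n * K * (a • centeringMatrix n)ᵀ * K =
      a ^ 2 • (centeringMatrix n * K * (centeringMatrix n * K)) := by
  simp only [Matrix.transpose_smul, transpose_centeringMatrix, Matrix.smul_mul, Matrix.mul_smul,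
    smul_smul, mul_assoc, sq]

lemma sqrt_two_mul_trace_add_sq_le (hθ : 0 < θ) (hΔ : 0 < Δ) (hθΔ : θ * Δ ≤ 1)
    (hn : n * Δ ^ 2 ≤ 1) (hT : 1 ≤ n * Δ) {M : Matrix (Fin n) (Fin n) ℝ}
    (hM : M = (Δ / √(n * Δ)) ^ 2 • (centeringMatrix n * ouGridCovariance θ Δ n *
      (centeringMatrix n * ouGridCovariance θ Δ n))) :
    √(2 * (M * M).trace + (M.trace - 1 / (4 * θ ^ 3)) ^ 2) ≤
      √(128 / θ ^ 7 + (1 / (4 * θ ^ 2) + 16 / θ ^ 4) ^ 2) / √(n * Δ) := by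
  have hmean := abs_sq_mul_trace_centeringMatrix_mul_sub_le hθ hΔ hθΔ hn
  have hspread := pow_four_mul_trace_centeringMatrix_mul_pow_four_le (n := n) hθ hΔ hθΔ
  have hT0 : 0 < n * Δ := by linarith
  rw [div_pow, sq_sqrt hT0.le] at hM
  set N := centeringMatrix n * ouGridCovariance θ Δ n
  set T := n * Δ
  set D := 1 / (4 * θ ^ 2) + 16 / θ ^ 4
  have hvar : 2 * (M * M).trace ≤ 128 / θ ^ 7 / T := by
    calc 2 * (M * M).trace = 2 * (Δ ^ 4 * (N ^ 4).trace) / T ^ 2 := by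
          have hpow : N * N * (N * N) = N ^ 4 := by noncomm_ring
          rw [hM, Matrix.smul_mul, Matrix.mul_smul, smul_smul, hpow, Matrix.trace_smul,
            smul_eq_mul]
          ring
      _ ≤ 2 * (T * (64 / θ ^ 7)) / T ^ 2 := by gcongr
      _ = 128 / θ ^ 7 / T := by
          field_simp
          norm_num
  have hbias : (M.trace - 1 / (4 * θ ^ 3)) ^ 2 ≤ D ^ 2 / T := by
    calc (M.trace - 1 / (4 * θ ^ 3)) ^ 2
        = |Δ ^ 2 * (N * N).trace - T / (4 * θ ^ 3)| ^ 2 / T ^ 2 := by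
          rw [hM, Matrix.trace_smul, smul_eq_mul, sq_abs]
          field_simp
      _ ≤ D ^ 2 / (1 * T) := by
          rw [sq T]
          gcongr
      _ = D ^ 2 / T := by rw [one_mul]
  rw [← sqrt_div' _ hT0.le, add_div]
  exact sqrt_le_sqrt (add_le_add hvar hbias)

theorem dKol_bilinForm_centeringMatrix_le {Ω : Type*} [MeasurableSpace Ω] {P : Measure Ω}
    {U W : Ω → Fin n → ℝ} (hU : IsCenteredGaussianVector U (ouGridCovariance θ Δ n) P)
    (hW : IsCenteredGaussianVector W (ouGridCovariance θ Δ n) P) (hUW : IndepFun U W P)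
    (hθ : 0 < θ) (hΔ : 0 < Δ) (hθΔ : θ * Δ ≤ 1) (hn : n * Δ ^ 2 ≤ 1) (hT : 1 ≤ n * Δ) :
    dKol (P.map fun ω => U ω ⬝ᵥ ((Δ / √(n * Δ)) • centeringMatrix n) *ᵥ W ω)
        (gaussianReal 0 (1 / (4 * θ ^ 3)).toNNReal) ≤ ouRateConstant θ / √(n * Δ) := by
  have hw : 0 < 1 / (4 * θ ^ 3) := by positivity
  refine ciSup_le fun z => ?_
  have hbilin := hU.mul_abs_measureReal_bilinForm_sub_gaussianReal_le hW hUW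
    ((Δ / √(n * Δ)) • centeringMatrix n) (1 / (4 * θ ^ 3)).toNNReal (s := Set.Iic z)
    measurableSet_Iic
  rw [Real.coe_toNNReal _ hw.le] at hbilin
  have hle := hbilin.trans (sqrt_two_mul_trace_add_sq_le hθ hΔ hθΔ hn hT
    (smul_centeringMatrix_mul_mul_transpose_mul _ _))
  rw [← le_div_iff₀' hw] at hle
  refine hle.trans_eq ?_
  rw [ouRateConstant]
  field_simp

end GridCovariance

/-! ### Riemann sums -/

section RiemannSum

variable {E : Type*} [NormedAddCommGroup E] [NormedSpace ℝ E] [CompleteSpace E]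
  {f : ℝ → E} {a b : ℝ}

lemma norm_smul_sub_integral_le {c δ ε : ℝ} (hδ : 0 ≤ δ)
    (hf : ContinuousOn f (Set.Icc c (c + δ)))
    (hosc : ∀ x ∈ Set.Icc c (c + δ), ‖f c - f x‖ ≤ ε) :
    ‖δ • f c - ∫ x in c..c + δ, f x‖ ≤ ε * δ := by
  have hle : c ≤ c + δ := le_add_of_nonneg_right hδ
  have hconst : δ • f c = ∫ _ in c..c + δ, f c := by
    rw [intervalIntegral.integral_const, add_sub_cancel_left]
  rw [hconst, ← intervalIntegral.integral_sub intervalIntegrable_const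
    (hf.intervalIntegrable_of_Icc hle)]
  have hbound := intervalIntegral.norm_integral_le_of_norm_le_const (a := c) (b := c + δ)
    (f := fun x => f c - f x) (C := ε) fun x hx =>
      hosc x (Set.Ioc_subset_Icc_self (Set.uIoc_of_le hle ▸ hx))
  rwa [add_sub_cancel_left, abs_of_nonneg hδ] at hbound

lemma norm_riemannSum_sub_integral_le {δ ε : ℝ} (n : ℕ) (hδ : 0 ≤ δ)
    (hf : ContinuousOn f (Set.Icc a (a + n * δ)))
    (hosc : ∀ x ∈ Set.Icc a (a + n * δ), ∀ y ∈ Set.Icc a (a + n * δ), dist x y ≤ δ →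
      dist (f x) (f y) ≤ ε) :
    ‖δ • ∑ k ∈ range n, f (a + k * δ) - ∫ x in a..a + n * δ, f x‖ ≤ n * δ * ε := by
  have hsucc (k : ℕ) : a + (k + 1 : ℕ) * δ = a + k * δ + δ := by
    push_cast
    ring
  have hsub {k : ℕ} (hk : k < n) :
      Set.Icc (a + k * δ) (a + k * δ + δ) ⊆ Set.Icc a (a + n * δ) := by
    have hkn : ((k + 1 : ℕ) : ℝ) ≤ n := by exact_mod_cast hk
    rw [← hsucc]
    exact Set.Icc_subset_Icc (by nlinarith [k.cast_nonneg (α := ℝ)]) (by gcongr)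
  have hpieces : ∑ k ∈ range n, ∫ x in a + k * δ..a + k * δ + δ, f x =
      ∫ x in a..a + n * δ, f x := by
    have hadj := intervalIntegral.sum_integral_adjacent_intervals (f := f) (μ := volume)
      (a := fun k : ℕ => a + k * δ) (n := n) fun k hk => by
        rw [hsucc]
        exact (hf.mono (hsub hk)).intervalIntegrable_of_Icc (by linarith)
    simpa only [hsucc, Nat.cast_zero, zero_mul, add_zero] using hadj
  rw [← hpieces, smul_sum, ← sum_sub_distrib]
  calc _ ≤ ∑ _k ∈ range n, ε * δ := by
        refine norm_sum_le_of_le _ fun k hk => ?_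
        have hk' := hsub (mem_range.1 hk)
        refine norm_smul_sub_integral_le hδ (hf.mono hk') fun x hx => ?_
        rw [← dist_eq_norm]
        refine hosc _ (hk' (Set.left_mem_Icc.2 (by linarith))) _ (hk' hx) ?_
        rw [dist_comm, Real.dist_eq, abs_of_nonneg (sub_nonneg.2 hx.1)]
        linarith [hx.2]
    _ = n * δ * ε := by
        rw [sum_const, card_range, nsmul_eq_mul]
        ring

theorem tendsto_riemannSum (hab : a ≤ b) (hf : ContinuousOn f (Set.Icc a b)) :
    Tendsto (fun n : ℕ => ((b - a) / n) • ∑ k ∈ range n, f (a + k * ((b - a) / n))) atTop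
      (𝓝 (∫ x in a..b, f x)) := by
  have huc := Metric.uniformContinuousOn_iff_le.1
    (isCompact_Icc.uniformContinuousOn_of_continuous hf)
  refine Metric.tendsto_nhds.2 fun ε hε => ?_
  obtain ⟨η, hη, hosc⟩ := huc (ε / (b - a + 1)) (div_pos hε (by linarith))
  have hmesh : ∀ᶠ n : ℕ in atTop, (b - a) / n < η :=
    (tendsto_const_div_atTop_nhds_zero_nat (b - a)).eventually_lt_const hη
  filter_upwards [hmesh, eventually_gt_atTop 0] with n hn hn0
  have hend : a + n * ((b - a) / n) = b := by
    field_simp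
    ring
  have hbound := norm_riemannSum_sub_integral_le (f := f) (a := a) (ε := ε / (b - a + 1)) n
    (div_nonneg (sub_nonneg.2 hab) n.cast_nonneg) (by rwa [hend])
    (by rw [hend]; exact fun x hx y hy hxy => hosc x hx y hy (hxy.trans hn.le))
  rw [hend] at hbound
  rw [dist_eq_norm]
  refine hbound.trans_lt ?_
  have hlen : (n : ℝ) * ((b - a) / n) = b - a := by linarith
  rw [hlen, mul_div_assoc', div_lt_iff₀ (by linarith)]
  nlinarith

end RiemannSum

/-! ### Discretisation of the empirical covariance -/

section Discretization

lemma dotProduct_centeringMatrix_mulVec {n : ℕ} (x y : Fin n → ℝ) :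
    x ⬝ᵥ centeringMatrix n *ᵥ y = ∑ k, x k * y k - (n : ℝ)⁻¹ * (∑ k, x k) * ∑ k, y k := by
  have havg : averagingMatrix n *ᵥ y = fun _ => (n : ℝ)⁻¹ * ∑ k, y k := by
    ext
    simp only [averagingMatrix, Matrix.mulVec, dotProduct, Matrix.of_apply, mul_sum]
  rw [centeringMatrix, Matrix.sub_mulVec, Matrix.one_mulVec, dotProduct_sub, havg]
  simp only [dotProduct, ← sum_mul]
  ring

variable {X : Fin 2 → ℝ → Ω → ℝ} {θ T Δ : ℝ}

lemma ouYtilde_eq_dotProduct {Ω : Type} (X : Fin 2 → ℝ → Ω → ℝ) (i j : Fin 2) (n : ℕ) (Δ : ℝ)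
    (ω : Ω) : ouYtilde X i j n Δ ω =
      Δ * ((fun k : Fin n => X i (k * Δ) ω) ⬝ᵥ
        centeringMatrix n *ᵥ fun k : Fin n => X j (k * Δ) ω) := by
  rw [dotProduct_centeringMatrix_mulVec, ouYtilde, ouXtilde, ouXtilde]
  simp only [sum_range]
  field_simp

lemma tendsto_ouYtilde {Ω : Type} {X : Fin 2 → ℝ → Ω → ℝ} {i j : Fin 2} {ω : Ω}
    (hT : 0 < T) (hi : ContinuousOn (fun t => X i t ω) (Set.Ici 0))
    (hj : ContinuousOn (fun t => X j t ω) (Set.Ici 0)) :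
    Tendsto (fun n : ℕ => ouYtilde X i j n (T / n) ω) atTop (𝓝 (ouY X i j T ω)) := by
  have hsum {f : ℝ → ℝ} (hf : ContinuousOn f (Set.Ici 0)) :
      Tendsto (fun n : ℕ => T / n * ∑ k ∈ range n, f (k * (T / n))) atTop
        (𝓝 (∫ u in 0..T, f u)) := by
    simpa using tendsto_riemannSum hT.le (hf.mono Set.Icc_subset_Ici_self)
  have hmean {l : Fin 2} (hl : ContinuousOn (fun t => X l t ω) (Set.Ici 0)) :
      Tendsto (fun n : ℕ => ouXtilde X l n (T / n) ω) atTop (𝓝 (ouXbar X l T ω)) := by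
    refine ((hsum hl).const_mul (1 / T)).congr fun n => ?_
    rw [ouXtilde]
    field_simp
  have hlength : Tendsto (fun n : ℕ => n * (T / n)) atTop (𝓝 T) :=
    tendsto_const_nhds.congr' <| (eventually_ne_atTop 0).mono fun n hn => by field_simp
  exact (hsum (hi.mul hj)).sub ((hlength.mul (hmean hi)).mul (hmean hj))

namespace IsOUPair

lemma measurable_gridVector (hX : IsOUPair θ X) (i : Fin 2) (Δ : ℝ) (n : ℕ) :
    Measurable fun ω (k : Fin n) => X i (k * Δ) ω :=
  measurable_pi_lambda _ fun _ => hX.meas i _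

lemma isCenteredGaussianVector (hX : IsOUPair θ X) (hΔ : 0 ≤ Δ) (i : Fin 2) (n : ℕ) :
    IsCenteredGaussianVector (fun ω (k : Fin n) => X i (k * Δ) ω) (ouGridCovariance θ Δ n) ℙ :=
  .of_map_dotProduct (hX.measurable_gridVector i Δ n)
    (fun c => hX.gaussian i n (fun k => k * Δ) c fun _ => by positivity)
    fun k l => by rw [hX.cov i _ _ (by positivity) (by positivity), ouGridCovariance_apply hΔ]

lemma indepFun_gridVector (hX : IsOUPair θ X) (Δ : ℝ) (n : ℕ) :
    IndepFun (fun ω (k : Fin n) => X 0 (k * Δ) ω) (fun ω (k : Fin n) => X 1 (k * Δ) ω) ℙ :=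
  hX.indep.comp (φ := fun (x : ℝ → ℝ) (k : Fin n) => x (k * Δ))
    (ψ := fun (x : ℝ → ℝ) (k : Fin n) => x (k * Δ)) (by fun_prop) (by fun_prop)

lemma measurable_ouYtilde (hX : IsOUPair θ X) (i j : Fin 2) (n : ℕ) (Δ : ℝ) :
    Measurable (ouYtilde X i j n Δ) := by
  have hmeas := hX.meas
  unfold ouYtilde ouXtilde
  fun_prop

lemma dKol_ouYtilde_div_sqrt_le (hX : IsOUPair θ X) (hθ : 0 < θ) {n : ℕ} (hΔ : 0 < Δ)
    (hθΔ : θ * Δ ≤ 1) (hn : n * Δ ^ 2 ≤ 1) (hT : 1 ≤ n * Δ) :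
    dKol (Measure.map (fun ω => ouYtilde X 0 1 n Δ ω / √(n * Δ)) ℙ)
      (gaussianReal 0 (1 / (4 * θ ^ 3)).toNNReal) ≤ ouRateConstant θ / √(n * Δ) := by
  convert! dKol_bilinForm_centeringMatrix_le (hX.isCenteredGaussianVector hΔ.le 0 n)
    (hX.isCenteredGaussianVector hΔ.le 1 n) (hX.indepFun_gridVector Δ n) hθ hΔ hθΔ hn hT using 4
  rw [ouYtilde_eq_dotProduct, Matrix.smul_mulVec, dotProduct_smul, smul_eq_mul]
  ring

theorem dKol_ouY_div_sqrt_le (hX : IsOUPair θ X) [IsProbabilityMeasure (ℙ : Measure Ω)]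
    (hθ : 0 < θ) (hT : 1 ≤ T) :
    dKol (Measure.map (fun ω => ouY X 0 1 T ω / √T) ℙ)
      (gaussianReal 0 (1 / (4 * θ ^ 3)).toNNReal) ≤ ouRateConstant θ / √T := by
  have hT0 : 0 < T := one_pos.trans_le hT
  refine dKol_map_le_of_tendsto_ae (Z := fun (n : ℕ) ω => ouYtilde X 0 1 n (T / n) ω / √T)
    (fun n => (hX.measurable_ouYtilde 0 1 n _).div_const _) ?_ ?_
  · filter_upwards [hX.cont] with ω hω
    exact (tendsto_ouYtilde hT0 (hω 0) (hω 1)).div_const _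
  · filter_upwards [eventually_ge_atTop 1, tendsto_natCast_atTop_atTop.eventually_ge_atTop (θ * T),
      tendsto_natCast_atTop_atTop.eventually_ge_atTop (T ^ 2)] with n hn1 hnθ hnT
    have hn0 : (0 : ℝ) < n := by exact_mod_cast hn1
    have hnΔ : n * (T / n) = T := by field_simp
    have hgrid := hX.dKol_ouYtilde_div_sqrt_le hθ (n := n) (div_pos hT0 hn0)
      (by rwa [mul_div_assoc', div_le_one hn0])
      (by rw [div_pow, mul_div_assoc', div_le_one (by positivity), sq (n : ℝ)]; gcongr)
      (by rwa [hnΔ])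
    rwa [hnΔ] at hgrid

end IsOUPair

end Discretization

/-- there are `C(θ) > 0` and `T₀ ≥ 1` such that for all `T ≥ T₀`,
`d_Kol(Y₁₂(T)/√T, N(0, 1/(4θ³))) ≤ C(θ)·ln(T)/√T`; in particular
`Y₁₂(T)/√T ⇒ N(0, 1/(4θ³))` as `T → ∞`. -/
theorem stmt_6 (θ : ℝ) (hθ : 0 < θ) [IsProbabilityMeasure (ℙ : Measure Ω)]
    (X : Fin 2 → ℝ → Ω → ℝ) (hX : IsOUPair θ X) :
    (∃ C : ℝ, 0 < C ∧ ∃ T₀ : ℝ, 1 ≤ T₀ ∧ ∀ T : ℝ, T₀ ≤ T →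
      dKol (Measure.map (fun ω => ouY X 0 1 T ω / Real.sqrt T) ℙ)
          (gaussianReal 0 (Real.toNNReal (1 / (4 * θ ^ 3))))
        ≤ C * Real.log T / Real.sqrt T) ∧
    Tendsto (fun T : ℝ =>
        dKol (Measure.map (fun ω => ouY X 0 1 T ω / Real.sqrt T) ℙ)
          (gaussianReal 0 (Real.toNNReal (1 / (4 * θ ^ 3))))) atTop (𝓝 0) := by
  have hC : 0 < ouRateConstant θ := by
    rw [ouRateConstant]
    positivity
  refine ⟨⟨ouRateConstant θ, hC, exp 1, one_le_exp zero_le_one, fun T hT => ?_⟩, ?_⟩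
  · have hT1 : 1 ≤ T := (one_le_exp zero_le_one).trans hT
    have hlog : 1 ≤ log T := (le_log_iff_exp_le (by linarith)).2 hT
    refine (hX.dKol_ouY_div_sqrt_le hθ hT1).trans ?_
    gcongr
    exact le_mul_of_one_le_right hC.le hlog
  · exact squeeze_zero' (Eventually.of_forall fun T => dKol_nonneg _ _)
      ((eventually_ge_atTop 1).mono fun T hT => hX.dKol_ouY_div_sqrt_le hθ hT)
      (tendsto_sqrt_atTop.const_div_atTop _)

end
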